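/- Let n ≥ 2 be an integer, let 0 < r < R and 0 < r∗, R∗ be real numbers, and let H : [r, R] → ℝ be continuously differentiable with H(t) > 0 for all t ∈ [r, R], H(r) = r∗ and H(R) = R∗. Set α = log(R∗/r∗) / log(R/r). Then ∫_r^R ( (t·H'(t)/H(t))² + n − 1 )^{n/2} · (1/t) dt ≥ (α² + n − 1)^{n/2} · log(R/r). -/

import Mathlib

theorem tangent_aux (p c a x : ℝ) (hp : 1 ≤ p) (hc : 0 < c) :
    (a ^ 2 + c) ^ p + p * ((a ^ 2 + c) ^ p / (a ^ 2 + c)) * (2 * a) * (x - a)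
      ≤ (x ^ 2 + c) ^ p := by
  have hA : 0 < a ^ 2 + c := by positivity
  have hB : 0 < x ^ 2 + c := by positivity
  have hAp : 0 < (a ^ 2 + c) ^ p := Real.rpow_pos_of_pos hA p
  have h1 := one_add_mul_self_le_rpow_one_add
    (s := (x ^ 2 + c) / (a ^ 2 + c) - 1) (by have := div_pos hB hA; linarith) hp
  rw [add_sub_cancel, Real.div_rpow hB.le hA.le, le_div_iff₀ hAp] at h1
  refine le_trans ?_ h1
  have h2 : 0 ≤ p * ((a ^ 2 + c) ^ p / (a ^ 2 + c)) * (x - a) ^ 2 := by positivity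
  have h3 : (1 + p * ((x ^ 2 + c) / (a ^ 2 + c) - 1)) * (a ^ 2 + c) ^ p
      - ((a ^ 2 + c) ^ p + p * ((a ^ 2 + c) ^ p / (a ^ 2 + c)) * (2 * a) * (x - a))
      = p * ((a ^ 2 + c) ^ p / (a ^ 2 + c)) * (x - a) ^ 2 := by
    field_simp
    ring
  linarith

/-- one-dimensional form of the radial-symmetry proposition.
For `0 < r < R`, positive `r∗, R∗`, and a positive `C¹` function `H` on
`[r, R]` with `H(r) = r∗`, `H(R) = R∗`, setting
`α = log(R∗/r∗)/log(R/r)` one has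
`∫_r^R ((t H'(t)/H(t))² + n - 1)^(n/2) dt/t ≥ (α² + n - 1)^(n/2) log(R/r)`. -/
theorem stmt13 (n : ℕ) (hn : 2 ≤ n) (r R rs Rs : ℝ)
    (hr : 0 < r) (hrR : r < R) (hrs : 0 < rs) (hRs : 0 < Rs)
    (H : ℝ → ℝ) (hC1 : ContDiffOn ℝ 1 H (Set.Icc r R))
    (hpos : ∀ t ∈ Set.Icc r R, 0 < H t)
    (hHr : H r = rs) (hHR : H R = Rs) :
    (∫ t in r..R, ((t * deriv H t / H t) ^ 2 + (n : ℝ) - 1) ^ ((n : ℝ) / 2) / t) ≥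
      ((Real.log (Rs / rs) / Real.log (R / r)) ^ 2 + (n : ℝ) - 1) ^ ((n : ℝ) / 2) *
        Real.log (R / r) := by
  have hn' : (2 : ℝ) ≤ n := by exact_mod_cast hn
  set a := Real.log (Rs / rs) / Real.log (R / r) with ha
  set p : ℝ := (n : ℝ) / 2 with hp
  have hp1 : 1 ≤ p := by rw [hp]; linarith
  have hc : 0 < (n : ℝ) - 1 := by linarith
  have hR : 0 < R := hr.trans hrR
  have hL : 0 < Real.log (R / r) := Real.log_pos ((one_lt_div hr).2 hrR)
  have haL : a * Real.log (R / r) = Real.log (Rs / rs) := div_mul_cancel₀ _ hL.ne'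
  set g := derivWithin H (Set.Icc r R) with hg
  have hgc : ContinuousOn g (Set.Icc r R) :=
    hC1.continuousOn_derivWithin (uniqueDiffOn_Icc hrR) le_rfl
  have hHc : ContinuousOn H (Set.Icc r R) := hC1.continuousOn
  have hgd : ∀ t ∈ Set.Ioo r R, HasDerivAt H (g t) t := fun t ht =>
    ((hC1.differentiableOn one_ne_zero t (Set.Ioo_subset_Icc_self ht)).hasDerivWithinAt).hasDerivAt
      (Icc_mem_nhds ht.1 ht.2)
  have ht0 : ∀ t ∈ Set.Icc r R, t ≠ 0 := fun t ht => (hr.trans_le ht.1).ne'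
  have hH0 : ∀ t ∈ Set.Icc r R, H t ≠ 0 := fun t ht => (hpos t ht).ne'
  have hcongr : (∫ t in r..R, ((t * deriv H t / H t) ^ 2 + (n : ℝ) - 1) ^ p / t)
      = ∫ t in r..R, ((t * g t / H t) ^ 2 + ((n : ℝ) - 1)) ^ p / t := by
    rw [intervalIntegral.integral_of_le hrR.le, intervalIntegral.integral_of_le hrR.le,
      MeasureTheory.integral_Ioc_eq_integral_Ioo, MeasureTheory.integral_Ioc_eq_integral_Ioo]
    refine MeasureTheory.setIntegral_congr_fun measurableSet_Ioo fun t ht => ?_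
    simp only [(hgd t ht).deriv, add_sub_assoc]
  rw [hcongr, add_sub_assoc]
  set Ap := (a ^ 2 + ((n : ℝ) - 1)) ^ p with hAp
  set K := p * (Ap / (a ^ 2 + ((n : ℝ) - 1))) * (2 * a) with hK
  have hc1 : ContinuousOn (fun t => ((t * g t / H t) ^ 2 + ((n : ℝ) - 1)) ^ p / t)
      (Set.Icc r R) := by
    refine ContinuousOn.div (ContinuousOn.rpow_const ?_ ?_) continuousOn_id ht0
    · exact (((continuousOn_id.mul hgc).div hHc hH0).pow 2).add continuousOn_const
    · intro t _
      left
      positivity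
  have hc2 : ContinuousOn (fun t => (Ap - K * a) * t⁻¹ + K * (g t / H t)) (Set.Icc r R) :=
    (continuousOn_const.mul (continuousOn_id.inv₀ ht0)).add
      (continuousOn_const.mul (hgc.div hHc hH0))
  have hi1 := hc1.intervalIntegrable_of_Icc (μ := MeasureTheory.volume) hrR.le
  have hi2 := hc2.intervalIntegrable_of_Icc (μ := MeasureTheory.volume) hrR.le
  have hftc := intervalIntegral.integral_eq_sub_of_hasDerivAt_of_le
    (f := fun t => (Ap - K * a) * Real.log t + K * Real.log (H t)) hrR.le
    ((continuousOn_const.mul (continuousOn_id.log ht0)).add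
      (continuousOn_const.mul (hHc.log hH0)))
    (fun t ht => ((Real.hasDerivAt_log (ht0 t (Set.Ioo_subset_Icc_self ht))).const_mul _).add
      (((hgd t ht).log (hH0 t (Set.Ioo_subset_Icc_self ht))).const_mul _)) hi2
  have hmono := intervalIntegral.integral_mono_on hrR.le hi2 hi1 (fun t ht => by
    have htp : 0 < t := hr.trans_le ht.1
    have hT := tangent_aux p ((n : ℝ) - 1) a (t * g t / H t) hp1 hc
    rw [← hAp, ← hK] at hT
    rw [le_div_iff₀ htp]
    refine le_trans (le_of_eq ?_) hT
    have := hH0 t ht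
    clear_value K Ap
    field_simp
    ring)
  refine ge_iff_le.2 (le_trans (le_of_eq ?_) hmono)
  rw [hftc]
  simp only [hHr, hHR]
  rw [Real.log_div hR.ne' hr.ne', Real.log_div hRs.ne' hrs.ne'] at haL
  rw [Real.log_div hR.ne' hr.ne']
  clear_value K Ap a
  linear_combination K * haL
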